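/- For all integers n ≥ 0 and k ≥ 0 one has (in ℤ): D(n,k) − T(n,k) = (−1)^k · C(n−k+1, k), where C denotes the binomial coefficient, interpreted as 0 when n−k+1 < k. -/

import Mathlib

/-!
A signed simsun permutation of rank `n + 1` arises in exactly one way from one of rank `n`, by
inserting `n + 1` or `-(n + 1)` into the word so that no double descent is created. Weight a
permutation by its sign `(-1) ^ (number of negative entries)` times `X ^ des_B`, let `S n` be the
total weight, and `SPos n` the part with no descent at position `0`, that is, with
`π(1) > 0` (or `n = 0`).

Take a word with `d` descents. Inserting `n + 1` or `-(n + 1)` into a descent is always allowed and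
keeps `d`, so these two cancel. Inserting `n + 1` at the end keeps `d` and contributes `X ^ d`. All
other insertions raise `d` by one: `n + 1` goes into an ascent not followed by a descent, and
`-(n + 1)` into an ascent, or the end, not preceded by a descent. As descents are never adjacent,
there is one more insertion of the second kind if the word starts with an ascent or is empty, and
equally many of both kinds otherwise. Hence `S (n + 1) = S n - X * SPos n` (`insSum_eq`, `S_succ`).
Keeping only the insertions after which the first letter is positive gives `SPos (n + 1) = S n`
(`insSum_filter_eq`, `SPos_succ`). So `S (n + 2) = S (n + 1) - X * S n` with `S 0 = 1` and
`S 1 = 1 - X`, and Pascal's rule identifies the coefficients (`coeff_S`).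
-/

open Finset

/-- A signed permutation of rank `n`, encoded as an (unsigned) permutation of
`Fin n` together with a choice of sign for each position: the entry
`π(i+1)` of the word is `±(σ(i)+1)` where the sign is `-` iff `sgn i = true`. -/
abbrev SignedPerm (n : ℕ) := Equiv.Perm (Fin n) × (Fin n → Bool)

/-- The entry `π(j+1)` of the word of a signed permutation. -/
def entry {n : ℕ} (π : SignedPerm n) (j : Fin n) : ℤ :=
  (if π.2 j then -1 else 1) * (((π.1 j : ℕ) : ℤ) + 1)

/-- The word `π(0)π(1)⋯π(n)` of a signed permutation (with the leading `0`). -/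
def word {n : ℕ} (π : SignedPerm n) : List ℤ :=
  0 :: List.ofFn (entry π)

/-- `π(i)` for `0 ≤ i ≤ n` (and `0` outside this range). -/
def wordFn {n : ℕ} (π : SignedPerm n) (i : ℕ) : ℤ :=
  if h : 1 ≤ i ∧ i ≤ n then entry π ⟨i - 1, by omega⟩ else 0

/-- A word has no double descent: no three consecutive strictly decreasing entries. -/
def noDD : List ℤ → Bool
  | a :: b :: c :: rest => (!(decide (b < a) && decide (c < b))) && noDD (b :: c :: rest)
  | _ => true

/-- A signed permutation is simsun if for every `0 ≤ k ≤ n`, deleting the entries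
`±n, …, ±(n-k+1)` (i.e. keeping the entries of absolute value `≤ m := n - k`) from the
word `π(0)π(1)⋯π(n)` leaves a word with no three consecutive strictly decreasing
entries. -/
def IsSimsun {n : ℕ} (π : SignedPerm n) : Prop :=
  ∀ m ≤ n, noDD ((word π).filter (fun a => a.natAbs ≤ m)) = true

instance {n : ℕ} : DecidablePred (IsSimsun (n := n)) := fun _ => by
  unfold IsSimsun; infer_instance

/-- The type-B descent number `des_B(π) = #{0 ≤ i ≤ n-1 : π(i) > π(i+1)}`. -/
def desB {n : ℕ} (π : SignedPerm n) : ℕ :=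
  ((Finset.range n).filter (fun i => wordFn π (i + 1) < wordFn π i)).card

/-- The set of signed simsun permutations of rank `n`. -/
def RB (n : ℕ) : Finset (SignedPerm n) := univ.filter IsSimsun

/-- Signed simsun permutations with `π(1) > 0` (for `n = 0`, the empty permutation
is included, following the convention `R⁺_0 = 1`). -/
def RBp (n : ℕ) : Finset (SignedPerm n) :=
  (RB n).filter (fun π => 0 < wordFn π 1 ∨ n = 0)

/-- Signed simsun permutations with `π(1) < 0`. -/
def RBm (n : ℕ) : Finset (SignedPerm n) :=
  (RB n).filter (fun π => wordFn π 1 < 0)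

/-- A signed permutation is even-signed if its word has an even number of negative entries. -/
def IsEvenSigned {n : ℕ} (π : SignedPerm n) : Prop :=
  (univ.filter (fun j => π.2 j = true)).card % 2 = 0

instance {n : ℕ} : DecidablePred (IsEvenSigned (n := n)) := fun _ => by
  unfold IsEvenSigned; infer_instance

def RD (n : ℕ) : Finset (SignedPerm n) := (RB n).filter IsEvenSigned
def RT (n : ℕ) : Finset (SignedPerm n) := (RB n).filter (fun π => ¬ IsEvenSigned π)
def RDp (n : ℕ) : Finset (SignedPerm n) := (RD n).filter (fun π => 0 < wordFn π 1 ∨ n = 0)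
def RDm (n : ℕ) : Finset (SignedPerm n) := (RD n).filter (fun π => wordFn π 1 < 0)
def RTp (n : ℕ) : Finset (SignedPerm n) := (RT n).filter (fun π => 0 < wordFn π 1 ∨ n = 0)
def RTm (n : ℕ) : Finset (SignedPerm n) := (RT n).filter (fun π => wordFn π 1 < 0)

/-- `R(n,k)`, as an integer, vanishing for `k < 0`. -/
def Rcnt (n : ℕ) (k : ℤ) : ℤ := ((RB n).filter (fun π => (desB π : ℤ) = k)).card
def Rpcnt (n : ℕ) (k : ℤ) : ℤ := ((RBp n).filter (fun π => (desB π : ℤ) = k)).card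
def Rmcnt (n : ℕ) (k : ℤ) : ℤ := ((RBm n).filter (fun π => (desB π : ℤ) = k)).card
def Dcnt (n : ℕ) (k : ℤ) : ℤ := ((RD n).filter (fun π => (desB π : ℤ) = k)).card
def Tcnt (n : ℕ) (k : ℤ) : ℤ := ((RT n).filter (fun π => (desB π : ℤ) = k)).card
def Dpcnt (n : ℕ) (k : ℤ) : ℤ := ((RDp n).filter (fun π => (desB π : ℤ) = k)).card
def Dmcnt (n : ℕ) (k : ℤ) : ℤ := ((RDm n).filter (fun π => (desB π : ℤ) = k)).card
def Tpcnt (n : ℕ) (k : ℤ) : ℤ := ((RTp n).filter (fun π => (desB π : ℤ) = k)).card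
def Tmcnt (n : ℕ) (k : ℤ) : ℤ := ((RTm n).filter (fun π => (desB π : ℤ) = k)).card

open Polynomial

/-! ### Words -/

/-- The number of descents of a word. -/
def listDes : List ℤ → ℕ
  | a :: b :: l => (if b < a then 1 else 0) + listDes (b :: l)
  | _ => 0

/-- Whether the word `a :: l` starts with a descent. -/
def startsDesc (a : ℤ) : List ℤ → Bool
  | [] => false
  | b :: _ => decide (b < a)

lemma startsDesc_cons (a b : ℤ) (l : List ℤ) : startsDesc a (b :: l) = decide (b < a) := rfl

/-- `X ^ des w` if the word `w` has no double descent, and `0` otherwise. -/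
noncomputable def wt (w : List ℤ) : ℤ[X] :=
  if noDD w = true then X ^ listDes w else 0

lemma noDD_cons_cons (a b : ℤ) (l : List ℤ) :
    noDD (a :: b :: l) = ((!(decide (b < a) && startsDesc b l)) && noDD (b :: l)) := by
  cases l <;> simp [noDD, startsDesc]

lemma wt_cons_cons_asc {a b : ℤ} (h : ¬ b < a) (l : List ℤ) :
    wt (a :: b :: l) = wt (b :: l) := by
  simp [wt, noDD_cons_cons, listDes, h]

lemma wt_cons_cons_desc {a b : ℤ} (h : b < a) (l : List ℤ) :
    wt (a :: b :: l) = if startsDesc b l = true then 0 else X * wt (b :: l) := by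
  cases hs : startsDesc b l <;> simp [wt, noDD_cons_cons, listDes, h, hs, pow_add]

/-- Inserting a very small letter after `a`, when `a :: l` does not start with a descent. -/
lemma wt_insert_neg {M : ℤ} {a : ℤ} {l : List ℤ} (ha : -M < a) (hl : ∀ x ∈ l, -M < x)
    (hs : startsDesc a l = false) :
    wt (a :: -M :: l) = X * wt (a :: l) := by
  cases l with
  | nil => simp [wt, noDD, listDes, ha]
  | cons c l =>
    have hc : -M < c := hl c (by simp)
    have hca : ¬ c < a := by simpa [startsDesc] using hs
    rw [wt_cons_cons_desc ha, wt_cons_cons_asc hca, wt_cons_cons_asc (by omega)]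
    simp [startsDesc, hc.le]

/-- The effect of inserting a very small or very large letter into a descent. -/
lemma wt_insert_of_desc {M a b : ℤ} {l : List ℤ} (hba : b < a) (hb : b < M) (haM : a < M)
    (hb' : -M < b) (h : noDD (a :: b :: l) = true) :
    wt (a :: M :: b :: l) = wt (a :: b :: l) ∧ wt (a :: -M :: b :: l) = wt (a :: b :: l) := by
  have hs : startsDesc b l = false := by
    rw [noDD_cons_cons] at h
    cases hh : startsDesc b l <;> simp_all
  constructor
  · rw [wt_cons_cons_asc (by omega), wt_cons_cons_desc hb, wt_cons_cons_desc hba]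
  · rw [wt_cons_cons_desc (by omega : -M < a), wt_cons_cons_asc (by omega : ¬ b < -M),
      wt_cons_cons_desc hba]
    simp [startsDesc_cons, hb'.not_gt, hs]

/-- The effect of inserting a very large letter into a non-descent. -/
lemma wt_insert_pos_of_asc {M a b : ℤ} {l : List ℤ} (hba : ¬ b < a) (hb : b < M) (haM : a < M) :
    wt (a :: M :: b :: l) = if startsDesc b l = true then 0 else X * wt (a :: b :: l) := by
  rw [wt_cons_cons_asc (by omega), wt_cons_cons_desc hb, wt_cons_cons_asc hba]

/-- Signed total weight of all words obtained from `a :: l` by inserting `M` or `-M` after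
the first letter, an insertion of `-M` counting negatively. -/
noncomputable def insSum (M a : ℤ) (l : List ℤ) : ℤ[X] :=
  ∑ p ∈ range (l.length + 1), (wt (a :: l.insertIdx p M) - wt (a :: l.insertIdx p (-M)))

/-- Contribution to `insSum M a (b :: l)` of the insertions after the letter `b`. -/
noncomputable def insSumTail (M a b : ℤ) (l : List ℤ) : ℤ[X] :=
  ∑ p ∈ range (l.length + 1),
    (wt (a :: b :: l.insertIdx p M) - wt (a :: b :: l.insertIdx p (-M)))

lemma insSum_cons (M a b : ℤ) (l : List ℤ) :
    insSum M a (b :: l) =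
      insSumTail M a b l + (wt (a :: M :: b :: l) - wt (a :: -M :: b :: l)) := by
  rw [insSum, List.length_cons, sum_range_succ']
  simp [insSumTail]

lemma insSumTail_of_asc {M a b : ℤ} (h : ¬ b < a) (l : List ℤ) :
    insSumTail M a b l = insSum M b l := by
  simp only [insSumTail, insSum, wt_cons_cons_asc h]

/-- After a descent `a > b`, the only insertion behind `b` that is lost is that of `-M`
immediately after `b`. -/
lemma insSumTail_of_desc {M a b : ℤ} {l : List ℤ} (h : b < a) (hbM : b < M) (hb : -M < b)
    (hs : startsDesc b l = false) :
    insSumTail M a b l = X * (insSum M b l + wt (b :: -M :: l)) := by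
  rw [insSumTail, insSum, sum_range_succ', sum_range_succ', mul_add, mul_add, mul_sum, add_assoc]
  congr 1
  · refine sum_congr rfl fun p hp => ?_
    cases l with
    | nil => simp at hp
    | cons c l =>
      have hc : startsDesc b (c :: l) = false := hs
      simp only [List.insertIdx_succ_cons, wt_cons_cons_desc h]
      simp only [startsDesc] at hc ⊢
      simp [hc, mul_sub]
  · simp only [List.insertIdx_zero, wt_cons_cons_desc h]
    simp [startsDesc_cons, hb, hbM.not_gt]
    ring

/-- Inserting `M` and `-M` with `M` large into `a :: l` in all ways. Insertions into descents
cancel in pairs; for the others, `M` prefers non-descents not followed by a descent and `-M`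
those not preceded by one, and the two counts almost agree. -/
lemma insSum_eq (M : ℤ) (l : List ℤ) (a : ℤ) (h : noDD (a :: l) = true)
    (hM : ∀ x ∈ a :: l, -M < x ∧ x < M) :
    insSum M a l = if startsDesc a l = true then wt (a :: l) else (1 - X) * wt (a :: l) := by
  induction l generalizing a with
  | nil =>
    have := hM a (by simp)
    have h1 : ¬ M < a := by omega
    simp [insSum, wt, noDD, listDes, startsDesc, h1, this.1]
  | cons b l ih =>
    have ha := hM a (by simp)
    have hb := hM b (by simp)
    have hl : ∀ x ∈ b :: l, -M < x ∧ x < M := fun x hx => hM x (List.mem_cons_of_mem _ hx)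
    have hn := h
    rw [noDD_cons_cons, Bool.and_eq_true] at hn
    have ih' := ih b hn.2 hl
    rw [insSum_cons]
    by_cases hba : b < a
    · have hs : startsDesc b l = false := by
        have := hn.1
        cases hh : startsDesc b l <;> simp_all
      obtain ⟨e1, e2⟩ := wt_insert_of_desc hba hb.2 ha.2 hb.1 h
      rw [e1, e2, insSumTail_of_desc hba hb.2 hb.1 hs, ih',
        wt_insert_neg hb.1 (fun x hx => (hl x (List.mem_cons_of_mem _ hx)).1) hs,
        wt_cons_cons_desc hba]
      simp [hs, startsDesc_cons, hba]
      ring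
    · rw [insSumTail_of_asc hba, ih', wt_insert_pos_of_asc hba hb.2 ha.2,
        wt_insert_neg ha.1 (fun x hx => (hl x hx).1) (by simpa [startsDesc] using hba),
        wt_cons_cons_asc hba]
      have hd : startsDesc a (b :: l) = false := by simpa [startsDesc] using hba
      cases hs : startsDesc b l <;> (simp [hd]; try ring)

/-- The insertions for which the resulting word does not start with a descent contribute
exactly `wt (a :: l)`. -/
lemma insSum_filter_eq (M : ℤ) (l : List ℤ) (a : ℤ) (h : noDD (a :: l) = true)
    (hM : ∀ x ∈ a :: l, -M < x ∧ x < M) :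
    ∑ p ∈ range (l.length + 1),
      ((if startsDesc a (l.insertIdx p M) = true then 0 else wt (a :: l.insertIdx p M)) -
        (if startsDesc a (l.insertIdx p (-M)) = true then 0 else wt (a :: l.insertIdx p (-M))))
      = wt (a :: l) := by
  have ha := hM a (by simp)
  cases l with
  | nil =>
    have h1 : ¬ M < a := by omega
    simp [wt, noDD, listDes, startsDesc, h1, ha.1]
  | cons b l =>
    have hb := hM b (by simp)
    have hl : ∀ x ∈ b :: l, -M < x ∧ x < M := fun x hx => hM x (List.mem_cons_of_mem _ hx)
    have h1 : ¬ M < a := by omega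
    rw [List.length_cons, sum_range_succ']
    simp only [List.insertIdx_succ_cons, List.insertIdx_zero, startsDesc, decide_eq_true_eq,
      h1, ha.1, if_true, if_false]
    by_cases hba : b < a
    · simp [hba, (wt_insert_of_desc hba hb.2 ha.2 hb.1 h).1]
    · simp only [hba, if_false]
      rw [noDD_cons_cons, Bool.and_eq_true] at h
      change insSumTail M a b l + _ = _
      rw [insSumTail_of_asc hba, insSum_eq M l b h.2 hl, wt_insert_pos_of_asc hba hb.2 ha.2,
        wt_cons_cons_asc hba]
      cases hs : startsDesc b l <;> (simp; try ring)

/-! ### Inserting the largest letter into a signed permutation -/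

/-- For `x = (π, p, s)`: insert the letter `n + 1` into `π` so that it gets the position `p`,
with a minus sign iff `s = true`. -/
def ins {n : ℕ} (x : SignedPerm n × Fin (n + 1) × Bool) : SignedPerm (n + 1) :=
  ((finSuccEquiv' x.2.1).trans ((Equiv.optionCongr x.1.1).trans (finSuccEquiv' (Fin.last n)).symm),
    x.2.1.insertNth x.2.2 x.1.2)

lemma ins_injective (n : ℕ) : Function.Injective (ins (n := n)) := by
  rintro ⟨⟨σ, f⟩, p, s⟩ ⟨⟨τ, g⟩, q, t⟩ h
  simp only [ins, Prod.mk.injEq] at h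
  obtain ⟨h1, h2⟩ := h
  have hpq : p = q := by
    have := congrArg (fun e => e p) h1
    simp only [Equiv.trans_apply, finSuccEquiv'_at, Equiv.optionCongr_apply, Option.map_none,
      EmbeddingLike.apply_eq_iff_eq] at this
    cases hq : finSuccEquiv' q p with
    | none => exact (finSuccEquiv'_eq_none.1 hq).symm
    | some j => simp [hq] at this
  subst hpq
  obtain ⟨rfl, rfl⟩ := Fin.insertNth_injective2 h2
  have h3 : Equiv.optionCongr σ = Equiv.optionCongr τ := by
    ext1 y
    have := congrArg (fun e => e ((finSuccEquiv' p).symm y)) h1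
    simpa using this
  rw [Equiv.optionCongr_injective h3]

lemma ins_bijective (n : ℕ) : Function.Bijective (ins (n := n)) := by
  rw [Fintype.bijective_iff_injective_and_card]
  refine ⟨ins_injective n, ?_⟩
  simp [Fintype.card_perm, Nat.factorial_succ, pow_succ]
  ring

lemma sum_signedPerm_succ {n : ℕ} (F : SignedPerm (n + 1) → ℤ[X]) :
    ∑ π, F π = ∑ π : SignedPerm n, ∑ p : Fin (n + 1),
      (F (ins (π, p, false)) + F (ins (π, p, true))) := by
  rw [← (ins_bijective n).sum_comp F, Fintype.sum_prod_type]
  refine sum_congr rfl fun π _ => ?_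
  rw [Fintype.sum_prod_type]
  refine sum_congr rfl fun p _ => ?_
  rw [Fintype.sum_bool, add_comm]

lemma entry_ins_same {n : ℕ} (π : SignedPerm n) (p : Fin (n + 1)) (s : Bool) :
    entry (ins (π, p, s)) p = if s then -((n : ℤ) + 1) else (n : ℤ) + 1 := by
  cases s <;> simp [entry, ins]

lemma entry_ins_succAbove {n : ℕ} (π : SignedPerm n) (p : Fin (n + 1)) (s : Bool) (i : Fin n) :
    entry (ins (π, p, s)) (p.succAbove i) = entry π i := by
  simp [entry, ins, finSuccEquiv'_succAbove]

lemma ofFn_eq_insertIdx {α : Type*} {n : ℕ} (F : Fin (n + 1) → α) (f : Fin n → α)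
    (p : Fin (n + 1)) (h : ∀ i, F (p.succAbove i) = f i) :
    List.ofFn F = (List.ofFn f).insertIdx p (F p) := by
  have hp : (p : ℕ) ≤ n := Nat.lt_succ_iff.1 p.2
  refine List.ext_getElem (by simp [List.length_insertIdx, hp]) fun j h1 h2 => ?_
  rw [List.getElem_insertIdx, List.getElem_ofFn]
  split_ifs with h3 h4
  · rw [List.getElem_ofFn, ← h, Fin.succAbove_of_castSucc_lt]
    · rfl
    · exact h3
  · congr 1
    exact Fin.ext h4
  · rw [List.getElem_ofFn, ← h, Fin.succAbove_of_le_castSucc]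
    · congr 1
      ext
      simp
      omega
    · rw [Fin.le_def]
      simp
      omega

/-- The word of a signed permutation without its leading `0`. -/
def body {n : ℕ} (π : SignedPerm n) : List ℤ := List.ofFn (entry π)

lemma body_ins {n : ℕ} (π : SignedPerm n) (p : Fin (n + 1)) (s : Bool) :
    body (ins (π, p, s)) =
      (body π).insertIdx p (if s then -((n : ℤ) + 1) else (n : ℤ) + 1) := by
  rw [body, ofFn_eq_insertIdx _ (entry π) p (entry_ins_succAbove π p s), entry_ins_same, body]

lemma natAbs_entry_le {n : ℕ} (π : SignedPerm n) (j : Fin n) : (entry π j).natAbs ≤ n := by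
  have := (π.1 j).2
  rw [entry]
  split_ifs <;> omega

lemma natAbs_body_le {n : ℕ} (π : SignedPerm n) : ∀ x ∈ body π, x.natAbs ≤ n := by
  intro x hx
  obtain ⟨j, rfl⟩ := (List.mem_ofFn' _ _).1 hx
  exact natAbs_entry_le π j

lemma filter_insertIdx {α : Type*} (P : α → Bool) (x : α) (hx : P x = false) (l : List α) (p : ℕ) :
    (l.insertIdx p x).filter P = l.filter P := by
  induction l generalizing p with
  | nil => cases p <;> simp [hx]
  | cons a l ih => cases p <;> simp [hx, List.filter_cons, ih]

lemma filter_word_self {n : ℕ} (π : SignedPerm n) :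
    (word π).filter (fun a => a.natAbs ≤ n) = word π := by
  rw [List.filter_eq_self]
  intro x hx
  rcases List.mem_cons.1 hx with rfl | hx
  · simp
  · simpa using natAbs_body_le π x hx

lemma isSimsun_noDD {n : ℕ} {π : SignedPerm n} (h : IsSimsun π) : noDD (0 :: body π) = true := by
  have := h n le_rfl
  rwa [filter_word_self] at this

lemma isSimsun_ins {n : ℕ} (π : SignedPerm n) (p : Fin (n + 1)) (s : Bool) :
    IsSimsun (ins (π, p, s)) ↔ IsSimsun π ∧ noDD (0 :: body (ins (π, p, s))) = true := by
  have key : ∀ m ≤ n, (word (ins (π, p, s))).filter (fun a => a.natAbs ≤ m) =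
      (word π).filter (fun a => a.natAbs ≤ m) := by
    intro m hm
    change (0 :: body _).filter _ = (0 :: body _).filter _
    rw [List.filter_cons, List.filter_cons, body_ins, filter_insertIdx]
    cases s <;> simp <;> omega
  constructor
  · intro h
    exact ⟨fun m hm => key m hm ▸ h m (by omega), isSimsun_noDD h⟩
  · rintro ⟨h, h'⟩ m hm
    rcases Nat.lt_or_ge n m with hm' | hm'
    · obtain rfl : m = n + 1 := by omega
      rw [filter_word_self]
      exact h'
    · rw [key m hm']
      exact h m hm'

/-- The sign `(-1) ^ (number of negative letters)`. -/
def sgn {n : ℕ} (π : SignedPerm n) : ℤ := ∏ j, if π.2 j = true then -1 else 1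

lemma sgn_eq {n : ℕ} (π : SignedPerm n) : sgn π = if IsEvenSigned π then 1 else -1 := by
  rw [sgn, prod_ite, prod_const, prod_const_one, mul_one]
  by_cases h : IsEvenSigned π
  · rw [if_pos h]
    exact Even.neg_one_pow (Nat.even_iff.2 h)
  · rw [if_neg h]
    exact Odd.neg_one_pow (Nat.not_even_iff_odd.1 fun h' => h (Nat.even_iff.1 h'))

lemma sgn_ins {n : ℕ} (π : SignedPerm n) (p : Fin (n + 1)) (s : Bool) :
    sgn (ins (π, p, s)) = (if s = true then -1 else 1) * sgn π := by
  rw [sgn, Fin.prod_univ_succAbove _ p]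
  simp [ins, sgn]

lemma card_descents_eq (w : List ℤ) :
    ((range (w.length - 1)).filter (fun i => w.getD (i + 1) 0 < w.getD i 0)).card
      = listDes w := by
  induction w with
  | nil => simp [listDes]
  | cons a l ih =>
    cases l with
    | nil => simp [listDes]
    | cons b l =>
      rw [listDes, ← ih, card_filter, card_filter]
      simp only [List.length_cons, Nat.add_sub_cancel]
      rw [sum_range_succ', add_comm]
      simp

lemma wordFn_eq {n : ℕ} (π : SignedPerm n) (i : ℕ) : wordFn π i = (word π).getD i 0 := by
  cases i with
  | zero => simp [wordFn, word]
  | succ i =>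
    by_cases h : i < n
    · have h' : 1 ≤ i + 1 ∧ i + 1 ≤ n := ⟨by omega, h⟩
      simp [wordFn, word, h', List.getD_eq_getElem?_getD]
    · have h' : ¬ (1 ≤ i + 1 ∧ i + 1 ≤ n) := by omega
      simp [wordFn, word, List.getD_eq_getElem?_getD, h]

lemma desB_eq {n : ℕ} (π : SignedPerm n) : desB π = listDes (0 :: body π) := by
  rw [← card_descents_eq]
  simp only [desB, wordFn_eq]
  simp [word, body]

/-! ### The generating polynomials -/

/-- The signed generating polynomial of `des_B` over signed simsun permutations. -/
noncomputable def S (n : ℕ) : ℤ[X] :=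
  ∑ π : SignedPerm n, if IsSimsun π then C (sgn π) * wt (0 :: body π) else 0

/-- The part of `S n` coming from permutations whose first letter is not negative. -/
noncomputable def SPos (n : ℕ) : ℤ[X] :=
  ∑ π : SignedPerm n, if IsSimsun π then
    C (sgn π) * (if startsDesc 0 (body π) = true then 0 else wt (0 :: body π)) else 0

lemma body_bound {n : ℕ} (π : SignedPerm n) :
    ∀ x ∈ 0 :: body π, -((n : ℤ) + 1) < x ∧ x < (n : ℤ) + 1 := by
  intro x hx
  rcases List.mem_cons.1 hx with rfl | hx
  · omega
  · have := natAbs_body_le π x hx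
    omega

/-- Reduction of a sum over rank `n + 1` to insertions into words of rank `n`, for a statistic
vanishing on words with a double descent. -/
lemma sum_simsun_succ (n : ℕ) (G : List ℤ → ℤ[X])
    (hG : ∀ l, noDD (0 :: l) ≠ true → G l = 0) :
    (∑ π : SignedPerm (n + 1), if IsSimsun π then C (sgn π) * G (body π) else 0) =
      ∑ π : SignedPerm n, if IsSimsun π then C (sgn π) *
        ∑ p ∈ range ((body π).length + 1), (G ((body π).insertIdx p ((n : ℤ) + 1)) -
          G ((body π).insertIdx p (-((n : ℤ) + 1)))) else 0 := by
  rw [sum_signedPerm_succ]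
  refine sum_congr rfl fun π _ => ?_
  have hlen : (body π).length = n := by simp [body]
  rw [hlen, sum_range]
  have key : ∀ (p : Fin (n + 1)) (s : Bool),
      (if IsSimsun (ins (π, p, s)) then C (sgn (ins (π, p, s))) * G (body (ins (π, p, s))) else 0)
      = if IsSimsun π then C ((if s = true then -1 else 1) * sgn π) *
        G ((body π).insertIdx p (if s then -((n : ℤ) + 1) else (n : ℤ) + 1)) else 0 := by
    intro p s
    rw [← body_ins, ← sgn_ins π p, if_congr (isSimsun_ins π p s) rfl rfl]
    by_cases h1 : IsSimsun π
    · by_cases h2 : noDD (0 :: body (ins (π, p, s))) = true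
      · simp [h1, h2]
      · simp [h2, hG _ h2]
    · simp [h1]
  simp only [key]
  by_cases h1 : IsSimsun π
  · simp only [h1, if_true, mul_sum]
    refine sum_congr rfl fun p _ => ?_
    simp
    ring
  · simp [h1]

lemma S_succ (n : ℕ) : S (n + 1) = S n - X * SPos n := by
  rw [S, sum_simsun_succ n (fun l => wt (0 :: l)) (fun l hl => by simp [wt, hl]), S, SPos,
    mul_sum, ← sum_sub_distrib]
  refine sum_congr rfl fun π _ => ?_
  by_cases h : IsSimsun π
  · simp only [h, if_true]
    have := insSum_eq ((n : ℤ) + 1) (body π) 0 (isSimsun_noDD h) (body_bound π)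
    rw [insSum] at this
    rw [this]
    split_ifs <;> ring
  · simp [h]

lemma SPos_succ (n : ℕ) : SPos (n + 1) = S n := by
  rw [SPos, sum_simsun_succ n (fun l => if startsDesc 0 l = true then 0 else wt (0 :: l))
    (fun l hl => by simp [wt, hl]), S]
  refine sum_congr rfl fun π _ => ?_
  by_cases h : IsSimsun π
  · simp only [h, if_true]
    rw [insSum_filter_eq ((n : ℤ) + 1) (body π) 0 (isSimsun_noDD h) (body_bound π)]
  · simp [h]

lemma isSimsun_zero (π : SignedPerm 0) : IsSimsun π := by
  intro m _
  simp [word, noDD]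

lemma S_zero : S 0 = 1 := by
  simp [S, isSimsun_zero, body, wt, noDD, listDes, sgn]

lemma SPos_zero : SPos 0 = 1 := by
  simp [SPos, isSimsun_zero, body, wt, noDD, listDes, sgn, startsDesc]

lemma S_succ_succ (n : ℕ) : S (n + 2) = S (n + 1) - X * S n := by
  rw [S_succ (n + 1), SPos_succ]

lemma coeff_S (n k : ℕ) : (S n).coeff k = (-1) ^ k * ((n + 1 - k).choose k : ℤ) := by
  induction n using Nat.strong_induction_on generalizing k with
  | _ n ih =>
    match n, k with
    | 0, 0 => simp [S_zero]
    | 0, k + 1 => simp [S_zero, coeff_one]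
    | 1, 0 => simp [S_succ, S_zero, SPos_zero]
    | 1, 1 => simp [S_succ, S_zero, SPos_zero, coeff_one]
    | 1, k + 2 => simp [S_succ, S_zero, SPos_zero, coeff_one, coeff_X]
    | n + 2, 0 =>
      rw [S_succ_succ, coeff_sub, ih (n + 1) (by omega)]
      simp
    | n + 2, k + 1 =>
      rw [S_succ_succ, coeff_sub, coeff_X_mul, ih (n + 1) (by omega), ih n (by omega)]
      rcases Nat.lt_or_ge (n + 1) k with hk | hk
      · have e1 : n + 1 + 1 - (k + 1) = 0 := by omega
        have e2 : n + 1 - k = 0 := by omega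
        have e3 : n + 2 + 1 - (k + 1) = 0 := by omega
        obtain ⟨k, rfl⟩ : ∃ j, k = j + 1 := ⟨k - 1, by omega⟩
        simp [e1, e2, e3]
      · have e1 : n + 1 + 1 - (k + 1) = n + 1 - k := by omega
        have e3 : n + 2 + 1 - (k + 1) = (n + 1 - k) + 1 := by omega
        rw [e1, e3, Nat.choose_succ_succ]
        push_cast
        ring

lemma coeff_S_eq (n k : ℕ) : (S n).coeff k = Dcnt n k - Tcnt n k := by
  rw [S, finsetSum_coeff, Dcnt, Tcnt, RD, RT, RB]
  simp only [filter_filter, card_filter]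
  push_cast
  rw [← sum_sub_distrib]
  refine sum_congr rfl fun π _ => ?_
  by_cases h : IsSimsun π
  · have hd : wt (0 :: body π) = X ^ desB π := by rw [wt, if_pos (isSimsun_noDD h), desB_eq]
    by_cases he : IsEvenSigned π <;> simp [h, he, hd, sgn_eq, coeff_X_pow, eq_comm]
  · simp [h]

/-- `D(n,k) − T(n,k) = (−1)^k C(n−k+1,k)` (the binomial coefficient being `0`
when `n−k+1 < k`). -/
theorem stmt16 (n k : ℕ) :
    Dcnt n k - Tcnt n k = (-1 : ℤ) ^ k * ((n + 1 - k).choose k : ℤ) := by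
  rw [← coeff_S_eq, coeff_S]
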